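/- arXiv:1512.05687 — 2 statements merged into one kernel-verified Lean document; each statement's English description precedes it below -/
import Mathlib

section
/- Let ρ and H be n × n complex matrices with ρ a density matrix (positive semidefinite with trace 1) and H Hermitian, and suppose that for every n × n complex matrix A one has Re tr(ρ A† H A) ≥ Re tr(ρ A† A H) (the finite-dimensional ground state condition tr(ρ A†[H,A]) ≥ 0). Then for every finite family (A_i)_{i∈I} of n × n complex matrices satisfying Σ_{i∈I} A_i† A_i = I (Kraus operators of a completely positive trace-preserving map Φ(X) = Σ_i A_i X A_i†), the energy cannot decrease: Re tr((Σ_{i∈I} A_i ρ A_i†) H) ≥ Re tr(ρ H). -/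
open Matrix
open scoped ComplexOrder

open scoped BigOperators

/-- **CPTP maps cannot decrease the energy of a ground state.**
If `ρ` is a density matrix and `H` Hermitian with the ground state property
`Re tr(ρ A† H A) ≥ Re tr(ρ A† A H)` for every matrix `A`, then for every finite
Kraus family `(Aᵢ)` with `Σᵢ Aᵢ† Aᵢ = 1` one has
`Re tr((Σᵢ Aᵢ ρ Aᵢ†) H) ≥ Re tr(ρ H)`. -/
theorem cptp_does_not_decrease_energy {n : Type*} [Fintype n] [DecidableEq n]
    (ρ H : Matrix n n ℂ) (hρ : ρ.PosSemidef) (htr : ρ.trace = 1)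
    (hH : H.IsHermitian)
    (hgs : ∀ A : Matrix n n ℂ, ((ρ * Aᴴ * A * H).trace).re ≤ ((ρ * Aᴴ * H * A).trace).re)
    {ι : Type*} [Fintype ι] (A : ι → Matrix n n ℂ)
    (hkraus : ∑ i, (A i)ᴴ * A i = 1) :
    ((ρ * H).trace).re ≤ (((∑ i, A i * ρ * (A i)ᴴ) * H).trace).re := by
  have h1 : ρ * H = ∑ i, ρ * (A i)ᴴ * A i * H := by
    have : ρ * H = ρ * (∑ i, (A i)ᴴ * A i) * H := by rw [hkraus, mul_one]
    rw [this, Finset.mul_sum, Finset.sum_mul]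
    simp only [mul_assoc]
  rw [h1, Finset.sum_mul, trace_sum, trace_sum, Complex.re_sum, Complex.re_sum]
  refine Finset.sum_le_sum fun i _ => (hgs (A i)).trans_eq ?_
  rw [trace_mul_comm]
  simp only [mul_assoc]
end

section
/- Let H be an n × n Hermitian complex matrix and ρ a density matrix satisfying the ground state condition: Re tr(ρ A†(HA − AH)) ≥ 0 for every n × n complex matrix A. Let M be an orthogonal projection (M² = M = M†) commuting with H (MH = HM) such that tr(MρM) ≠ 0. Then ρ_M := MρM / tr(MρM) is again a density matrix, and ρ_M also satisfies the ground state condition: Re tr(ρ_M A†(HA − AH)) ≥ 0 for every n × n complex matrix A. -/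
open Matrix
open scoped ComplexOrder

/-- **Restriction of a ground state by a commuting projector is a ground state.**
Let `ρ` be a density matrix satisfying the ground state condition
`Re tr(ρ A†[H,A]) ≥ 0` for every matrix `A`, with `H` Hermitian.  If `M` is an
orthogonal projection commuting with `H` and `tr(MρM) ≠ 0`, then
`ρ_M := MρM / tr(MρM)` is again a density matrix satisfying the ground state
condition. -/
theorem restricted_state_is_ground_state {n : Type*} [Fintype n] [DecidableEq n]
    (ρ H M : Matrix n n ℂ) (hρ : ρ.PosSemidef) (htr : ρ.trace = 1)
    (hH : H.IsHermitian)
    (hgs : ∀ A : Matrix n n ℂ, 0 ≤ ((ρ * Aᴴ * (H * A - A * H)).trace).re)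
    (hM2 : M * M = M) (hMH : Mᴴ = M) (hcomm : M * H = H * M)
    (hne : (M * ρ * M).trace ≠ 0) :
    (((M * ρ * M).trace)⁻¹ • (M * ρ * M)).PosSemidef ∧
      (((M * ρ * M).trace)⁻¹ • (M * ρ * M)).trace = 1 ∧
      ∀ A : Matrix n n ℂ,
        0 ≤ (((((M * ρ * M).trace)⁻¹ • (M * ρ * M)) * Aᴴ * (H * A - A * H)).trace).re := by
  have hP : (M * ρ * M).PosSemidef := by
    have h := hρ.mul_mul_conjTranspose_same M
    rwa [hMH] at h
  have ht : 0 ≤ ((M * ρ * M).trace)⁻¹ := by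
    have h := hP.trace_nonneg
    rw [Complex.nonneg_iff] at h ⊢
    rw [Complex.inv_re, Complex.inv_im, ← h.2]
    exact ⟨div_nonneg h.1 (Complex.normSq_nonneg _), by simp⟩
  refine ⟨hP.smul ht, ?_, ?_⟩
  · rw [Matrix.trace_smul, smul_eq_mul, inv_mul_cancel₀ hne]
  · intro A
    have key : (M * ρ * M * Aᴴ * (H * A - A * H)).trace
        = (ρ * (A * M)ᴴ * (H * (A * M) - (A * M) * H)).trace := by
      have h1 : H * (A * M) - (A * M) * H = (H * A - A * H) * M := by
        rw [Matrix.mul_assoc A M H, hcomm]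
        noncomm_ring
      rw [h1, Matrix.conjTranspose_mul, hMH, ← Matrix.mul_assoc _ _ M,
        Matrix.trace_mul_comm _ M]
      simp only [Matrix.mul_assoc]
    rw [Matrix.smul_mul, Matrix.smul_mul, Matrix.trace_smul, smul_eq_mul, key]
    have h := hgs (A * M)
    rw [Complex.nonneg_iff] at ht
    rw [Complex.mul_re, ← ht.2, zero_mul, sub_zero]
    exact mul_nonneg ht.1 h
end
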